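/- Let n be a positive integer and L > 0, and let f : ℝⁿ → ℝ be a differentiable function in F_{−L,L}(ℝⁿ), bounded below with f⋆ := inf f finite. Suppose f satisfies the Polyak–Łojasiewicz inequality with modulus η, 0 < η ≤ L, on the sublevel set {x : f(x) ≤ f(x¹)}. Set κ := η/L and α⋆ := (1 − κ)/(2 + κ). Then the point x² := x¹ − ((1 + α⋆)/L)∇f(x¹) satisfies f(x²) − f⋆ ≤ ((4 − κ³ − 3κ)/(2 + κ)²)·(f(x¹) − f⋆). -/

import Mathlib

/-- `f` belongs to the class `F_{μ,L}(ℝⁿ)`: minimum curvature `μ`, maximum curvature `L`. -/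
def MemFClass {n : ℕ} (μ L : ℝ) (f : EuclideanSpace ℝ (Fin n) → ℝ) : Prop :=
  ConvexOn ℝ Set.univ (fun x => f x - μ / 2 * ‖x‖ ^ 2) ∧
  ConvexOn ℝ Set.univ (fun x => L / 2 * ‖x‖ ^ 2 - f x)

/-!
The boosted step passes through the ordinary gradient step `y = x - L⁻¹ • ∇ f x` and continues by
`-(α / L) • ∇ f x`. The interpolation inequality between `x` and `y`, used in both directions,
gives the descent `f y + ‖∇ f x‖² / (2L) + ‖∇ f y‖² / (4L) ≤ f x` and a lower bound on
`⟪∇ f y, ∇ f x⟫`, so that the quadratic upper bound at `y` controls the extra displacement. The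
Polyak–Łojasiewicz inequality at `x` and at `y` turns the two gradient norms into function values,
and `α = (1 - κ) / (2 + κ)` makes the rate of the ordinary step equal to `2α`.
-/

open Set Filter Topology
open scoped Gradient RealInnerProductSpace

section FirstOrder

variable {E : Type*} [NormedAddCommGroup E] [NormedSpace ℝ E]
  {s : Set E} {φ : ℝ → ℝ} {f : E → ℝ} {f' : ℝ} {x y : E}

theorem add_lineDeriv_add_le_of_uniformConvexOn (hf : UniformConvexOn s φ f) (hx : x ∈ s)
    (hy : y ∈ s) (hf' : HasLineDerivAt ℝ f f' x (y - x)) :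
    f x + f' + φ ‖y - x‖ ≤ f y := by
  have hslope : ∀ᶠ t : ℝ in 𝓝[>] 0,
      t⁻¹ • (f (x + t • (y - x)) - f x) ≤ f y - f x - (1 - t) * φ ‖y - x‖ := by
    filter_upwards [Ioo_mem_nhdsGT one_pos] with t ⟨ht₀, ht₁⟩
    have hseg := hf.2 hy hx ht₀.le (sub_nonneg.2 ht₁.le) (add_sub_cancel t 1)
    rw [show t • y + (1 - t) • x = x + t • (y - x) by module] at hseg
    rw [smul_eq_mul, inv_mul_le_iff₀ ht₀]
    simp only [smul_eq_mul] at hseg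
    linarith
  have hbound : Tendsto (fun t : ℝ => f y - f x - (1 - t) * φ ‖y - x‖) (𝓝[>] 0)
      (𝓝 (f y - f x - (1 - 0) * φ ‖y - x‖)) :=
    Continuous.continuousWithinAt (by fun_prop)
  have hlimit := le_of_tendsto_of_tendsto hf'.tendsto_slope_zero_right hbound hslope
  linarith

theorem le_add_lineDeriv_sub_of_uniformConcaveOn (hf : UniformConcaveOn s φ f) (hx : x ∈ s)
    (hy : y ∈ s) (hf' : HasLineDerivAt ℝ f f' x (y - x)) :
    f y ≤ f x + f' - φ ‖y - x‖ := by
  have hneg := add_lineDeriv_add_le_of_uniformConvexOn hf.neg hx hy hf'.neg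
  simp only [Pi.neg_apply] at hneg
  linarith

end FirstOrder

section Gradient

variable {E : Type*} [NormedAddCommGroup E] [InnerProductSpace ℝ E]

theorem strongConcaveOn_neg_iff_convexOn {s : Set E} {L : ℝ} {f : E → ℝ} :
    StrongConcaveOn s (-L) f ↔ ConvexOn ℝ s fun x => L / 2 * ‖x‖ ^ 2 - f x := by
  rw [strongConcaveOn_iff_convex, ← neg_convexOn_iff]
  congr! 2 with x
  simp only [Pi.neg_apply]
  ring

variable [CompleteSpace E] {s : Set E} {m M : ℝ} {f : E → ℝ} {g g' x y : E}

theorem add_inner_add_norm_sq_le_of_strongConvexOn (hf : StrongConvexOn s m f) (hx : x ∈ s)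
    (hy : y ∈ s) (hg : HasGradientAt f g x) :
    f x + ⟪g, y - x⟫ + m / 2 * ‖y - x‖ ^ 2 ≤ f y :=
  add_lineDeriv_add_le_of_uniformConvexOn hf hx hy (hg.hasFDerivAt.hasLineDerivAt (y - x))

theorem le_add_inner_sub_norm_sq_of_strongConcaveOn (hf : StrongConcaveOn s m f) (hx : x ∈ s)
    (hy : y ∈ s) (hg : HasGradientAt f g x) :
    f y ≤ f x + ⟪g, y - x⟫ - m / 2 * ‖y - x‖ ^ 2 :=
  le_add_lineDeriv_sub_of_uniformConcaveOn hf hx hy (hg.hasFDerivAt.hasLineDerivAt (y - x))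

theorem sub_smul_le_of_strongConcaveOn (hf : StrongConcaveOn univ m f) (hg : HasGradientAt f g x)
    (t : ℝ) (v : E) :
    f (x - t • v) ≤ f x - t * ⟪g, v⟫ - m / 2 * (t ^ 2 * ‖v‖ ^ 2) := by
  have h := le_add_inner_sub_norm_sq_of_strongConcaveOn hf (mem_univ x) (mem_univ (x - t • v)) hg
  rw [sub_sub_cancel_left, inner_neg_right, real_inner_smul_right, norm_neg, norm_smul, mul_pow,
    Real.norm_eq_abs, sq_abs] at h
  linarith

theorem interpolation_of_strongConvexOn_of_strongConcaveOn (hmM : m < M)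
    (hconvex : StrongConvexOn univ m f) (hconcave : StrongConcaveOn univ (-M) f)
    (hx : HasGradientAt f g x) (hy : HasGradientAt f g' y) :
    f y + ⟪g', x - y⟫ + m / 2 * ‖x - y‖ ^ 2 + ‖g - g' - m • (x - y)‖ ^ 2 / (2 * (M - m)) ≤ f x := by
  have hpos : 0 < M - m := sub_pos.2 hmM
  set d := x - y with hd
  set e := g - g' - m • d with he
  -- `z` minimizes the upper model at `x` minus the lower model at `y`.
  set z := x - (M - m)⁻¹ • e with hz
  have hlower := add_inner_add_norm_sq_le_of_strongConvexOn hconvex (mem_univ y) (mem_univ z) hy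
  have hupper := sub_smul_le_of_strongConcaveOn hconcave hx (M - m)⁻¹ e
  have hmodels := hlower.trans hupper
  rw [show z - y = d - (M - m)⁻¹ • e by rw [hz, hd]; abel,
    show g = g' + m • d + e by rw [he]; abel, norm_sub_sq_real, norm_smul, mul_pow,
    Real.norm_eq_abs, sq_abs] at hmodels
  simp only [inner_sub_right, inner_add_left, real_inner_smul_left, real_inner_smul_right,
    real_inner_self_eq_norm_sq] at hmodels
  rw [← sub_nonneg] at hmodels ⊢
  refine hmodels.trans_eq ?_
  field_simp
  ring

end Gradient

section GradientStep

variable {E : Type*} [NormedAddCommGroup E] [InnerProductSpace ℝ E] [CompleteSpace E]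
  {L : ℝ} {f : E → ℝ} {g g' x : E}

theorem gradient_step_add_norm_sq_le (hL : 0 < L) (hconvex : StrongConvexOn univ (-L) f)
    (hconcave : StrongConcaveOn univ (-L) f) (hg : HasGradientAt f g x)
    (hg' : HasGradientAt f g' (x - L⁻¹ • g)) :
    f (x - L⁻¹ • g) + ‖g‖ ^ 2 / (2 * L) + ‖g'‖ ^ 2 / (4 * L) ≤ f x := by
  have h := interpolation_of_strongConvexOn_of_strongConcaveOn (neg_lt_self hL)
    hconvex hconcave hg hg'
  rw [sub_sub_cancel, smul_smul, neg_mul, mul_inv_cancel₀ hL.ne',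
    show g - g' - (-1 : ℝ) • g = (2 : ℝ) • g - g' by module, norm_sub_sq_real, norm_smul, norm_smul,
    real_inner_smul_left, real_inner_smul_right, real_inner_comm, Real.norm_eq_abs, mul_pow,
    sq_abs, Real.norm_ofNat] at h
  refine le_of_eq_of_le ?_ h
  field_simp
  ring

theorem gradient_step_le (hL : 0 < L) (hconcave : StrongConcaveOn univ (-L) f)
    (hg : HasGradientAt f g x) : f (x - L⁻¹ • g) ≤ f x :=
  calc f (x - L⁻¹ • g) ≤ f x - L⁻¹ * ⟪g, g⟫ - -L / 2 * (L⁻¹ ^ 2 * ‖g‖ ^ 2) :=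
        sub_smul_le_of_strongConcaveOn hconcave hg L⁻¹ g
    _ = f x - ‖g‖ ^ 2 / (2 * L) := by
        rw [real_inner_self_eq_norm_sq]
        field_simp
        ring
    _ ≤ f x := sub_le_self _ (by positivity)

theorem sub_gradient_step_add_norm_sq_le (hL : 0 < L) (hconvex : StrongConvexOn univ (-L) f)
    (hconcave : StrongConcaveOn univ (-L) f) (hg : HasGradientAt f g x)
    (hg' : HasGradientAt f g' (x - L⁻¹ • g)) :
    f x - f (x - L⁻¹ • g) + ‖g'‖ ^ 2 / (4 * L) ≤ ‖g‖ ^ 2 / (2 * L) + ⟪g', g⟫ / L := by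
  have h := interpolation_of_strongConvexOn_of_strongConcaveOn (neg_lt_self hL)
    hconvex hconcave hg' hg
  rw [sub_sub_cancel_left, smul_neg, smul_smul, neg_mul, mul_inv_cancel₀ hL.ne',
    show g' - g - -((-1 : ℝ) • g) = g' - (2 : ℝ) • g by module, norm_sub_sq_real, norm_neg,
    norm_smul, norm_smul, inner_neg_right, real_inner_smul_right, real_inner_smul_right,
    real_inner_self_eq_norm_sq, Real.norm_eq_abs, mul_pow, sq_abs, Real.norm_ofNat] at h
  rw [← sub_nonneg] at h ⊢
  refine h.trans_eq ?_
  field_simp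
  ring

theorem boosted_gradient_step_le {α : ℝ} (hL : 0 < L) (hα : 0 ≤ α)
    (hconvex : StrongConvexOn univ (-L) f) (hconcave : StrongConcaveOn univ (-L) f)
    (hg : HasGradientAt f g x) (hg' : HasGradientAt f g' (x - L⁻¹ • g)) :
    f (x - ((1 + α) / L) • g) ≤
      α ^ 2 * f x + (1 - α ^ 2) * f (x - L⁻¹ • g) - α * (2 + α) * (‖g'‖ ^ 2 / (4 * L)) := by
  set y := x - L⁻¹ • g with hy
  have hstep : x - ((1 + α) / L) • g = y - (α / L) • g := by rw [hy]; module
  have hboost : f (x - ((1 + α) / L) • g) ≤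
      f y - α * (⟪g', g⟫ / L) + α ^ 2 * (‖g‖ ^ 2 / (2 * L)) := by
    rw [hstep]
    refine (sub_smul_le_of_strongConcaveOn hconcave hg' (α / L) g).trans_eq ?_
    field_simp
    ring
  have hinner := mul_le_mul_of_nonneg_left
    (sub_gradient_step_add_norm_sq_le hL hconvex hconcave hg hg') hα
  have hdescent := mul_le_mul_of_nonneg_left
    (gradient_step_add_norm_sq_le hL hconvex hconcave hg hg') (by positivity : 0 ≤ α * (1 + α))
  linear_combination hboost + hinner + hdescent

end GradientStep

section PolyakLojasiewicz

theorem div_mul_le_div_of_le_one_div_mul {a b η L : ℝ} (hL : 0 < L) (hη : 0 < η)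
    (h : a ≤ 1 / (2 * η) * b) : η / L * a ≤ b / (2 * L) :=
  calc η / L * a ≤ η / L * (1 / (2 * η) * b) := by gcongr
    _ = b / (2 * L) := by field_simp

variable {E : Type*} [NormedAddCommGroup E] [InnerProductSpace ℝ E] [CompleteSpace E]
  {L η κ c : ℝ} {f : E → ℝ} {g g' x : E}

theorem gradient_step_sub_le_of_PL (hL : 0 < L) (hκ : -2 < κ)
    (hconvex : StrongConvexOn univ (-L) f) (hconcave : StrongConcaveOn univ (-L) f)
    (hg : HasGradientAt f g x) (hg' : HasGradientAt f g' (x - L⁻¹ • g))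
    (hPL : κ * (f x - c) ≤ ‖g‖ ^ 2 / (2 * L))
    (hPL' : κ * (f (x - L⁻¹ • g) - c) ≤ ‖g'‖ ^ 2 / (2 * L)) :
    f (x - L⁻¹ • g) - c ≤ 2 * ((1 - κ) / (2 + κ)) * (f x - c) := by
  have hdescent := gradient_step_add_norm_sq_le hL hconvex hconcave hg hg'
  have hhalf : ‖g'‖ ^ 2 / (4 * L) = ‖g'‖ ^ 2 / (2 * L) / 2 := by ring
  have hpos : 0 < 2 + κ := by linarith
  rw [mul_div_assoc', div_mul_eq_mul_div, le_div_iff₀ hpos]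
  linarith

theorem boosted_gradient_step_sub_le_of_PL {α : ℝ} (hL : 0 < L) (hα : 0 ≤ α)
    (hconvex : StrongConvexOn univ (-L) f) (hconcave : StrongConcaveOn univ (-L) f)
    (hg : HasGradientAt f g x) (hg' : HasGradientAt f g' (x - L⁻¹ • g))
    (hPL' : κ * (f (x - L⁻¹ • g) - c) ≤ ‖g'‖ ^ 2 / (2 * L)) :
    f (x - ((1 + α) / L) • g) - c ≤
      α ^ 2 * (f x - c) + (1 - α ^ 2 - κ * α * (2 + α) / 2) * (f (x - L⁻¹ • g) - c) := by
  have hboost := boosted_gradient_step_le hL hα hconvex hconcave hg hg'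
  have hPL_scaled := mul_le_mul_of_nonneg_left hPL' (by positivity : 0 ≤ α * (2 + α) / 2)
  linear_combination hboost + hPL_scaled

theorem gradient_descent_PL_optimal_boost_general (hL : 0 < L) (hdiff : Differentiable ℝ f)
    (hconvex : StrongConvexOn univ (-L) f) (hconcave : StrongConcaveOn univ (-L) f)
    (hη : 0 < η) (hηL : η ≤ L)
    (hPL : f x - c ≤ 1 / (2 * η) * ‖∇ f x‖ ^ 2)
    (hPL' : f (x - L⁻¹ • ∇ f x) - c ≤ 1 / (2 * η) * ‖∇ f (x - L⁻¹ • ∇ f x)‖ ^ 2)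
    (hκ : κ = η / L) :
    f (x - ((1 + (1 - κ) / (2 + κ)) / L) • ∇ f x) - c ≤
      (4 - κ ^ 3 - 3 * κ) / (2 + κ) ^ 2 * (f x - c) := by
  have hκ₀ : 0 < κ := hκ ▸ div_pos hη hL
  have hκ₁ : κ ≤ 1 := hκ ▸ (div_le_one hL).2 hηL
  have hg := (hdiff x).hasGradientAt
  have hg' := (hdiff (x - L⁻¹ • ∇ f x)).hasGradientAt
  have hPL_scaled : κ * (f x - c) ≤ ‖∇ f x‖ ^ 2 / (2 * L) :=
    hκ ▸ div_mul_le_div_of_le_one_div_mul hL hη hPL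
  have hPL'_scaled : κ * (f (x - L⁻¹ • ∇ f x) - c) ≤ ‖∇ f (x - L⁻¹ • ∇ f x)‖ ^ 2 / (2 * L) :=
    hκ ▸ div_mul_le_div_of_le_one_div_mul hL hη hPL'
  set α := (1 - κ) / (2 + κ) with hα
  have hα₀ : 0 ≤ α := div_nonneg (sub_nonneg.2 hκ₁) (by positivity)
  have hcoeff : 1 - α ^ 2 - κ * α * (2 + α) / 2 = (κ ^ 2 + 2 * κ + 3) / (2 * (2 + κ)) := by
    rw [hα]
    field_simp
    ring
  have hcoeff₀ : 0 ≤ 1 - α ^ 2 - κ * α * (2 + α) / 2 := by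
    rw [hcoeff]
    positivity
  calc f (x - ((1 + α) / L) • ∇ f x) - c
      ≤ α ^ 2 * (f x - c) +
          (1 - α ^ 2 - κ * α * (2 + α) / 2) * (f (x - L⁻¹ • ∇ f x) - c) :=
        boosted_gradient_step_sub_le_of_PL hL hα₀ hconvex hconcave hg hg' hPL'_scaled
    _ ≤ α ^ 2 * (f x - c) + (1 - α ^ 2 - κ * α * (2 + α) / 2) * (2 * α * (f x - c)) := by
        gcongr
        exact gradient_step_sub_le_of_PL hL (by linarith) hconvex hconcave hg hg' hPL_scaled
          hPL'_scaled
    _ = (4 - κ ^ 3 - 3 * κ) / (2 + κ) ^ 2 * (f x - c) := by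
        rw [hα]
        field_simp
        ring

end PolyakLojasiewicz

/-- One gradient descent step with the optimally boosted step length `(1 + α⋆)/L`
under the Polyak–Łojasiewicz inequality. -/
theorem gradient_descent_PL_optimal_boost
    (n : ℕ) (hn : 0 < n)
    (L : ℝ) (hL : 0 < L)
    (f : EuclideanSpace ℝ (Fin n) → ℝ)
    (hdiff : Differentiable ℝ f)
    (hsmooth : MemFClass (-L) L f)
    (fstar : ℝ) (hfstar : IsGLB (Set.range f) fstar)
    (x1 : EuclideanSpace ℝ (Fin n))
    (η : ℝ) (hη0 : 0 < η) (hηL : η ≤ L)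
    (hPL : ∀ x, f x ≤ f x1 → f x - fstar ≤ 1 / (2 * η) * ‖gradient f x‖ ^ 2)
    (κ : ℝ) (hκ : κ = η / L)
    (αstar : ℝ) (hαstar : αstar = (1 - κ) / (2 + κ))
    (x2 : EuclideanSpace ℝ (Fin n))
    (hx2 : x2 = x1 - ((1 + αstar) / L) • gradient f x1) :
    f x2 - fstar ≤ (4 - κ ^ 3 - 3 * κ) / (2 + κ) ^ 2 * (f x1 - fstar) := by
  subst hαstar hx2
  have hconvex : StrongConvexOn univ (-L) f := strongConvexOn_iff_convex.2 hsmooth.1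
  have hconcave : StrongConcaveOn univ (-L) f := strongConcaveOn_neg_iff_convexOn.2 hsmooth.2
  exact gradient_descent_PL_optimal_boost_general hL hdiff hconvex hconcave hη0 hηL
    (hPL x1 le_rfl) (hPL _ (gradient_step_le hL hconcave (hdiff x1).hasGradientAt)) hκ
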